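/- Let A be a linear relation in a complex vector space H, let λ_1, …, λ_l ∈ ℂ be pairwise distinct, and suppose x^1, …, x^l ∈ H satisfy x^r ∈ R_{λ_r}(A) for r = 1, …, l and Σ_{r=1}^{l} x^r = 0. Then x^r ∈ R_c(A) for every r = 1, …, l. -/

import Mathlib

/-!
Everything rests on one statement, `mem_rootInf_of_sum`: if `x r ∈ R_{λ_r}(A)` with distinct `λ_r`
and `∑ x r ∈ R_∞(A)`, then every `x r ∈ R_∞(A)`. It is proved by induction on the total length of
the chains `x r → ⋯ → 0`. Since `A` maps `R_∞(A)` into itself, one step of `A - λ_s` applied to the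
sum gives another family with sum in `R_∞(A)`; it shortens the `s`-th chain and multiplies the
`r`-th vector by `λ_r - λ_s`, up to a shorter chain, so that vector can be recovered when `r ≠ s`.

With `∑ x r = 0` this yields `x r ∈ R_∞(A)`. For `x r ∈ R_0(A)` (immediate if `λ_r = 0`), the same
statement is applied to the inverse relation, which exchanges `0` with `∞` and `λ_r` with `λ_r⁻¹`
(`ker_pow_shift_le_inv`): the vectors `x r ∈ R_0(A⁻¹)` and `-x r ∈ R_{1/λ_r}(A⁻¹)` add up to `0`,
hence lie in `R_∞(A⁻¹) ⊆ R_0(A)`.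
-/


open Submodule Set

variable {H : Type*} [AddCommGroup H] [Module ℂ H]

/-- A linear relation in `H`: a linear subspace of the product `H × H`. -/
abbrev LinRel (H : Type*) [AddCommGroup H] [Module ℂ H] : Type _ := Submodule ℂ (H × H)

namespace LinRel

/-- The relation `A - λ = {(x, y - λ x) : (x,y) ∈ A}`. -/
def shift (A : LinRel H) (lam : ℂ) : LinRel H :=
  A.map ((LinearMap.fst ℂ H H).prod (LinearMap.snd ℂ H H - lam • LinearMap.fst ℂ H H))

/-- The relation `λ A = {(x, λ y) : (x,y) ∈ A}`. -/
def smulRel (lam : ℂ) (A : LinRel H) : LinRel H :=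
  A.map ((LinearMap.fst ℂ H H).prod (lam • LinearMap.snd ℂ H H))

/-- The inverse relation `A⁻¹ = {(y,x) : (x,y) ∈ A}`. -/
def inv (A : LinRel H) : LinRel H :=
  A.map ((LinearMap.snd ℂ H H).prod (LinearMap.fst ℂ H H))

/-- The product (composition) `A B = {(x,y) : ∃ z, (x,z) ∈ B ∧ (z,y) ∈ A}`. -/
def comp (A B : LinRel H) : LinRel H where
  carrier := {p | ∃ z, (p.1, z) ∈ B ∧ (z, p.2) ∈ A}
  zero_mem' := ⟨0, B.zero_mem, A.zero_mem⟩
  add_mem' := by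
    rintro p q ⟨z1, h1, h2⟩ ⟨z2, h3, h4⟩
    exact ⟨z1 + z2, B.add_mem h1 h3, A.add_mem h2 h4⟩
  smul_mem' := by
    rintro c p ⟨z, h1, h2⟩
    exact ⟨c • z, B.smul_mem c h1, A.smul_mem c h2⟩

/-- The identity relation `I = {(x,x) : x ∈ H}`. -/
def idRel : LinRel H := LinearMap.graph (LinearMap.id : H →ₗ[ℂ] H)

/-- Powers: `A⁰ = I` and `Aᵏ = A · Aᵏ⁻¹`. -/
def pow (A : LinRel H) : ℕ → LinRel H
  | 0 => idRel
  | (k+1) => comp A (pow A k)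

/-- The kernel `ker A = {x : (x,0) ∈ A}`. -/
def ker (A : LinRel H) : Submodule ℂ H := A.comap (LinearMap.inl ℂ H H)

/-- The multivalued part `mul A = {y : (0,y) ∈ A}`. -/
def mul (A : LinRel H) : Submodule ℂ H := A.comap (LinearMap.inr ℂ H H)

lemma mem_ker {A : LinRel H} {x : H} : x ∈ ker A ↔ (x, (0:H)) ∈ A := by
  simp [ker, Submodule.mem_comap]

lemma mem_mul {A : LinRel H} {y : H} : y ∈ mul A ↔ ((0:H), y) ∈ A := by
  simp [mul, Submodule.mem_comap]

lemma ker_pow_le_succ (A : LinRel H) (i : ℕ) : ker (pow A i) ≤ ker (pow A (i+1)) := by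
  intro x hx
  rw [mem_ker] at hx ⊢
  exact ⟨0, hx, A.zero_mem⟩

lemma ker_pow_mono (A : LinRel H) : Monotone fun i => ker (pow A i) :=
  monotone_nat_of_le_succ (ker_pow_le_succ A)

lemma mul_pow_le_succ (A : LinRel H) : ∀ i, mul (pow A i) ≤ mul (pow A (i+1)) := by
  intro i
  induction i with
  | zero =>
    intro y hy
    rw [mem_mul] at hy ⊢
    have : y = 0 := by simpa [pow, idRel, LinearMap.mem_graph_iff] using hy
    subst this
    exact Submodule.zero_mem _
  | succ i ih =>
    intro y hy
    rw [mem_mul] at hy ⊢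
    obtain ⟨w, hw, hwy⟩ := hy
    exact ⟨w, mem_mul.mp (ih (mem_mul.mpr hw)), hwy⟩

lemma mul_pow_mono (A : LinRel H) : Monotone fun i => mul (pow A i) :=
  monotone_nat_of_le_succ (mul_pow_le_succ A)

/-- The root space `R_λ(A) = ⋃_{i ≥ 1} ker (A - λ)ⁱ`. -/
def rootSpace (A : LinRel H) (lam : ℂ) : Submodule ℂ H where
  carrier := ⋃ i : ℕ, (ker (pow (shift A lam) (i+1)) : Set H)
  zero_mem' := Set.mem_iUnion.2 ⟨0, Submodule.zero_mem _⟩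
  add_mem' := by
    intro a b ha hb
    obtain ⟨i, hi⟩ := Set.mem_iUnion.1 ha
    obtain ⟨j, hj⟩ := Set.mem_iUnion.1 hb
    exact Set.mem_iUnion.2 ⟨max i j, Submodule.add_mem _
      (ker_pow_mono _ (by omega : i + 1 ≤ max i j + 1) hi)
      (ker_pow_mono _ (by omega : j + 1 ≤ max i j + 1) hj)⟩
  smul_mem' := by
    intro c a ha
    obtain ⟨i, hi⟩ := Set.mem_iUnion.1 ha
    exact Set.mem_iUnion.2 ⟨i, Submodule.smul_mem _ c hi⟩

/-- The root space at infinity `R_∞(A) = ⋃_{i ≥ 1} mul Aⁱ`. -/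
def rootInf (A : LinRel H) : Submodule ℂ H where
  carrier := ⋃ i : ℕ, (mul (pow A (i+1)) : Set H)
  zero_mem' := Set.mem_iUnion.2 ⟨0, Submodule.zero_mem _⟩
  add_mem' := by
    intro a b ha hb
    obtain ⟨i, hi⟩ := Set.mem_iUnion.1 ha
    obtain ⟨j, hj⟩ := Set.mem_iUnion.1 hb
    exact Set.mem_iUnion.2 ⟨max i j, Submodule.add_mem _
      (mul_pow_mono _ (by omega : i + 1 ≤ max i j + 1) hi)
      (mul_pow_mono _ (by omega : j + 1 ≤ max i j + 1) hj)⟩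
  smul_mem' := by
    intro c a ha
    obtain ⟨i, hi⟩ := Set.mem_iUnion.1 ha
    exact Set.mem_iUnion.2 ⟨i, Submodule.smul_mem _ c hi⟩

/-- The singular chain space `R_c(A) = R_0(A) ∩ R_∞(A)`. -/
def singChain (A : LinRel H) : Submodule ℂ H := rootSpace A 0 ⊓ rootInf A

/-- The root space at a point of `ℂ ∪ {∞}` (modelled as `Option ℂ`, with `none = ∞`). -/
def rootSpaceE (A : LinRel H) : Option ℂ → Submodule ℂ H
  | none => rootInf A
  | some lam => rootSpace A lam

/-- `λ ∈ ℂ ∪ {∞}` is an eigenvalue of `A`. -/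
def isEigenvalue (A : LinRel H) : Option ℂ → Prop
  | none => mul A ≠ ⊥
  | some lam => ker (shift A lam) ≠ ⊥

end LinRel
namespace LinRel

lemma mem_shift {A : LinRel H} {c : ℂ} {x y : H} :
    (x, y) ∈ shift A c ↔ (x, y + c • x) ∈ A := by
  simp only [shift, Submodule.mem_map]
  constructor
  · rintro ⟨⟨a, b⟩, h, e⟩
    obtain ⟨rfl, rfl⟩ := Prod.ext_iff.1 e
    simpa using h
  · intro h
    exact ⟨_, h, by simp⟩

lemma mem_inv {A : LinRel H} {x y : H} : (x, y) ∈ inv A ↔ (y, x) ∈ A := by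
  simp only [inv, Submodule.mem_map]
  constructor
  · rintro ⟨⟨a, b⟩, h, e⟩
    obtain ⟨rfl, rfl⟩ := Prod.ext_iff.1 e
    exact h
  · intro h
    exact ⟨_, h, by simp⟩

lemma mem_pow_zero {A : LinRel H} {x y : H} : (x, y) ∈ pow A 0 ↔ y = x := by
  simp [pow, idRel, LinearMap.mem_graph_iff]

/-- The recursion for powers with the first step split off, `Aᵏ⁺¹ = Aᵏ · A`. -/
lemma mem_pow_succ {A : LinRel H} {n : ℕ} {x y : H} :
    (x, y) ∈ pow A (n + 1) ↔ ∃ z, (x, z) ∈ A ∧ (z, y) ∈ pow A n := by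
  induction n generalizing y with
  | zero =>
    constructor
    · rintro ⟨z, h, h'⟩
      obtain rfl := mem_pow_zero.1 h
      exact ⟨y, h', mem_pow_zero.2 rfl⟩
    · rintro ⟨z, h, h'⟩
      obtain rfl := mem_pow_zero.1 h'
      exact ⟨x, mem_pow_zero.2 rfl, h⟩
  | succ n ih =>
    constructor
    · rintro ⟨w, h, h'⟩
      obtain ⟨z, hz, hz'⟩ := ih.1 h
      exact ⟨z, hz, w, hz', h'⟩
    · rintro ⟨z, hz, w, hw, h'⟩
      exact ⟨w, ih.2 ⟨z, hz, hw⟩, h'⟩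

lemma mem_ker_pow_zero {A : LinRel H} {x : H} : x ∈ ker (pow A 0) ↔ x = 0 := by
  rw [mem_ker, mem_pow_zero, eq_comm]

lemma mem_ker_pow_shift_succ {A : LinRel H} {c : ℂ} {n : ℕ} {x : H} :
    x ∈ ker (pow (shift A c) (n + 1)) ↔
      ∃ z, (x, z + c • x) ∈ A ∧ z ∈ ker (pow (shift A c) n) := by
  simp only [mem_ker, mem_pow_succ, mem_shift]

lemma mem_mul_pow_succ {A : LinRel H} {n : ℕ} {y : H} :
    y ∈ mul (pow A (n + 1)) ↔ ∃ z, z ∈ mul (pow A n) ∧ (z, y) ∈ A := by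
  simp only [mem_mul]
  exact Iff.rfl

lemma mem_rootSpace {A : LinRel H} {c : ℂ} {x : H} :
    x ∈ rootSpace A c ↔ ∃ n, x ∈ ker (pow (shift A c) n) := by
  constructor
  · intro h
    obtain ⟨i, hi⟩ := Set.mem_iUnion.1 h
    exact ⟨i + 1, hi⟩
  · rintro ⟨n, hn⟩
    exact Set.mem_iUnion.2 ⟨n, ker_pow_le_succ _ n hn⟩

lemma mem_rootInf {A : LinRel H} {x : H} : x ∈ rootInf A ↔ ∃ n, x ∈ mul (pow A n) := by
  constructor
  · intro h
    obtain ⟨i, hi⟩ := Set.mem_iUnion.1 h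
    exact ⟨i + 1, hi⟩
  · rintro ⟨n, hn⟩
    exact Set.mem_iUnion.2 ⟨n, mul_pow_le_succ _ n hn⟩

lemma rootInf_step {A : LinRel H} {x y : H} (hx : x ∈ rootInf A) (h : (x, y) ∈ A) :
    y ∈ rootInf A := by
  obtain ⟨n, hn⟩ := mem_rootInf.1 hx
  exact mem_rootInf.2 ⟨n + 1, mem_mul_pow_succ.2 ⟨x, hn, h⟩⟩

lemma inv_inv_rel (A : LinRel H) : inv (inv A) = A := by
  ext ⟨x, y⟩
  rw [mem_inv, mem_inv]

lemma rootInf_le_rootSpace_inv (A : LinRel H) : rootInf A ≤ rootSpace (inv A) 0 := by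
  intro x hx
  obtain ⟨n, hn⟩ := mem_rootInf.1 hx
  refine mem_rootSpace.2 ⟨n, ?_⟩
  clear hx
  induction n generalizing x with
  | zero => exact mem_ker_pow_zero.2 (mem_pow_zero.1 (mem_mul.1 hn))
  | succ n ih =>
    obtain ⟨z, hz, h⟩ := mem_mul_pow_succ.1 hn
    exact mem_ker_pow_shift_succ.2 ⟨z, by simpa [mem_inv] using h, ih hz⟩

/-- On `ker (A - c)ⁿ⁺¹` the relation `A` acts as `c` modulo `ker (A - c)ⁿ`. As `c ≠ 0`, every `x`
there has a preimage under `A` of the form `c⁻¹ x + u` with `u` in the smaller kernel. -/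
lemma exists_preimage {A : LinRel H} {c : ℂ} (hc : c ≠ 0) {n : ℕ} {x : H}
    (hx : x ∈ ker (pow (shift A c) (n + 1))) :
    ∃ u ∈ ker (pow (shift A c) n), (u + c⁻¹ • x, x) ∈ A := by
  induction n generalizing x with
  | zero =>
    obtain ⟨z, h, hz⟩ := mem_ker_pow_shift_succ.1 hx
    obtain rfl := mem_ker_pow_zero.1 hz
    refine ⟨0, Submodule.zero_mem _, ?_⟩
    simpa [smul_smul, hc] using A.smul_mem c⁻¹ h
  | succ n ih =>
    obtain ⟨z, h, hz⟩ := mem_ker_pow_shift_succ.1 hx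
    obtain ⟨v, hv, h'⟩ := ih hz
    -- `c⁻¹ x ↦ x + c⁻¹ z`, and the error `c⁻¹ z` is cancelled with the preimage of `z`.
    refine ⟨-(c⁻¹ • (v + c⁻¹ • z)), Submodule.neg_mem _ (Submodule.smul_mem _ _
      (Submodule.add_mem _ (ker_pow_le_succ _ _ hv) (Submodule.smul_mem _ _ hz))), ?_⟩
    have := A.sub_mem (A.smul_mem c⁻¹ h) (A.smul_mem c⁻¹ h')
    convert this using 1
    ext
    · simp; abel
    · simp [smul_smul, hc]

/-- The spectral mapping `c ↦ c⁻¹` for the inverse relation, at the level of root spaces. -/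
lemma ker_pow_shift_le_inv {A : LinRel H} {c : ℂ} (hc : c ≠ 0) (n : ℕ) :
    ker (pow (shift A c) n) ≤ ker (pow (shift (inv A) c⁻¹) n) := by
  induction n with
  | zero =>
    intro x hx
    exact mem_ker_pow_zero.2 (mem_ker_pow_zero.1 hx)
  | succ n ih =>
    intro x hx
    obtain ⟨u, hu, h⟩ := exists_preimage hc hx
    exact mem_ker_pow_shift_succ.2 ⟨u, mem_inv.2 h, ih hu⟩

lemma rootSpace_le_inv {A : LinRel H} {c : ℂ} (hc : c ≠ 0) :
    rootSpace A c ≤ rootSpace (inv A) c⁻¹ := by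
  intro x hx
  obtain ⟨n, hn⟩ := mem_rootSpace.1 hx
  exact mem_rootSpace.2 ⟨n, ker_pow_shift_le_inv hc n hn⟩

/-- The form of `mem_rootInf_of_sum` suited to induction on the total chain length `N`. -/
lemma mem_rootInf_of_sum_aux (A : LinRel H) {ι : Type*} [Fintype ι] (lam : ι → ℂ)
    (hdist : Function.Injective lam) (N : ℕ) (n : ι → ℕ) (hN : ∑ r, n r = N) (x : ι → H)
    (hx : ∀ r, x r ∈ ker (pow (shift A (lam r)) (n r))) (hsum : ∑ r, x r ∈ rootInf A) :
    ∀ r, x r ∈ rootInf A := by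
  classical
  induction N generalizing n x with
  | zero =>
    intro r
    have h0 : n r = 0 := by
      have := (Finset.sum_eq_zero_iff.1 hN) r (Finset.mem_univ r)
      simpa using this
    have h := hx r
    rw [h0] at h
    rw [mem_ker_pow_zero.1 h]
    exact Submodule.zero_mem _
  | succ N ih =>
    have hstep : ∀ r, ∃ z, (x r, z + lam r • x r) ∈ A ∧
        z ∈ ker (pow (shift A (lam r)) (n r - 1)) := by
      intro r
      have h := hx r
      rcases hn : n r with _ | m
      · rw [hn] at h
        rw [mem_ker_pow_zero.1 h]
        exact ⟨0, by rw [smul_zero, add_zero]; exact A.zero_mem, Submodule.zero_mem _⟩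
      · rw [hn] at h
        exact mem_ker_pow_shift_succ.1 h
    choose z hzA hz using hstep
    -- One step of `A - λ_s` keeps the sum in `R_∞(A)` and shortens the `s`-th chain.
    have key : ∀ s, n s ≠ 0 → ∀ r, z r + (lam r - lam s) • x r ∈ rootInf A := by
      intro s hs
      refine ih (Function.update n s (n s - 1)) ?_ (fun r => z r + (lam r - lam s) • x r) ?_ ?_
      · have h1 := Finset.sum_update_of_mem (Finset.mem_univ s) n (n s - 1)
        have h2 := Finset.add_sum_erase Finset.univ n (Finset.mem_univ s)
        rw [Finset.sdiff_singleton_eq_erase] at h1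
        omega
      · intro r
        by_cases hrs : r = s
        · subst hrs
          simpa using hz r
        · rw [Function.update_of_ne hrs]
          exact Submodule.add_mem _ (ker_pow_mono _ (Nat.sub_le (n r) 1) (hz r))
            (Submodule.smul_mem _ _ (hx r))
      · have hA : (∑ r, x r, ∑ r, (z r + lam r • x r)) ∈ A := by
          have := A.sum_mem (t := Finset.univ) (fun r _ => hzA r)
          convert this using 1
          ext <;> simp [Prod.fst_sum, Prod.snd_sum]
        have := Submodule.sub_mem _ (rootInf_step hsum hA)
          (Submodule.smul_mem _ (lam s) hsum)
        convert this using 1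
        rw [Finset.smul_sum, ← Finset.sum_sub_distrib]
        refine Finset.sum_congr rfl fun r _ => ?_
        rw [sub_smul, add_sub_assoc]
    have hzero : ∀ s, n s = 0 → x s = 0 := by
      intro s hs
      have h := hx s
      rw [hs] at h
      exact mem_ker_pow_zero.1 h
    have hzinf : ∀ s, z s ∈ rootInf A := by
      intro s
      by_cases hs : n s = 0
      · have h := hz s
        rw [hs] at h
        rw [mem_ker_pow_zero.1 h]
        exact Submodule.zero_mem _
      · simpa using key s hs s
    intro r
    by_cases hr : ∃ s, s ≠ r ∧ n s ≠ 0
    · obtain ⟨s, hsr, hs⟩ := hr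
      have h := (Submodule.add_mem_iff_right _ (hzinf r)).1 (key s hs r)
      have hne : lam r - lam s ≠ 0 := sub_ne_zero.2 fun e => hsr (hdist e).symm
      exact (Submodule.smul_mem_iff _ hne).1 h
    -- All other vectors vanish, so `x r` is the sum itself.
    · push Not at hr
      rwa [Fintype.sum_eq_single r fun s hs => hzero s (hr s hs)] at hsum

/-- The root spaces at distinct finite points are independent modulo `R_∞(A)`: a sum lies in
`R_∞(A)` only if each summand does. -/
lemma mem_rootInf_of_sum (A : LinRel H) {ι : Type*} [Fintype ι] (lam : ι → ℂ)
    (hdist : Function.Injective lam) (x : ι → H) (hx : ∀ r, x r ∈ rootSpace A (lam r))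
    (hsum : ∑ r, x r ∈ rootInf A) (r : ι) : x r ∈ rootInf A := by
  choose n hn using fun r => mem_rootSpace.1 (hx r)
  exact mem_rootInf_of_sum_aux A lam hdist _ n rfl x hn hsum r

lemma rootSpace_inf_rootInf_le (A : LinRel H) (c : ℂ) :
    rootSpace A c ⊓ rootInf A ≤ rootSpace A 0 := by
  rintro x ⟨hx, hinf⟩
  by_cases hc : c = 0
  · rwa [← hc]
  have h := mem_rootInf_of_sum (inv A) ![0, c⁻¹] ?_ ![x, -x] ?_ ?_ 0
  · simpa [inv_inv_rel] using rootInf_le_rootSpace_inv _ h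
  · intro i j
    fin_cases i <;> fin_cases j <;> simp [hc, eq_comm]
  · intro r
    fin_cases r
    · exact rootInf_le_rootSpace_inv A hinf
    · exact Submodule.neg_mem _ (rootSpace_le_inv hc hx)
  · simp

end LinRel

/-- if `x^r ∈ R_{λ_r}(A)` for pairwise distinct `λ_1, …, λ_l ∈ ℂ`
and `∑ x^r = 0`, then every `x^r ∈ R_c(A)`. -/
theorem statement_13 (A : LinRel H) (l : ℕ) (lam : Fin l → ℂ)
    (hdist : Function.Injective lam) (x : Fin l → H)
    (hx : ∀ r, x r ∈ LinRel.rootSpace A (lam r))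
    (hsum : ∑ r, x r = 0) :
    ∀ r, x r ∈ LinRel.singChain A := by
  intro r
  have hinf : x r ∈ LinRel.rootInf A :=
    LinRel.mem_rootInf_of_sum A lam hdist x hx (hsum ▸ Submodule.zero_mem _) r
  exact ⟨LinRel.rootSpace_inf_rootInf_le A (lam r) ⟨hx r, hinf⟩, hinf⟩
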